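/- Let α ∈ (0,1) and λ > 0. Then the one-parameter Mittag-Leffler function satisfies 0 < E_α(−λ t^α) ≤ 1 for all t ≥ 0, and t ↦ E_α(−λ t^α) is monotonically decreasing on [0,∞). -/

import Mathlib

open Set

/-- One-parameter Mittag-Leffler function `E_α(z) = Σ_m z^m / Γ(αm + 1)`. -/
noncomputable def mittagLeffler (α z : ℝ) : ℝ :=
  ∑' m : ℕ, z ^ m / Real.Gamma (α * m + 1)

open Filter Topology Ring Finset.HasAntidiagonal

/-!
Write `multichoose s n` for the coefficient of `q ^ n` in `(1 - q) ^ (-s)`. Multiplying the series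
`∑ m, (-y) ^ m (1 - q) ^ (-(α m + 1)) = (1 - q) ^ (α - 1) / ((1 - q) ^ α + y)` by `(1 - q) ^ α + y`
gives a recursion for its coefficients `u n y`. For `0 < α ≤ 1` the series `(1 - q) ^ α` has a
positive constant coefficient and no other positive one, so the recursion propagates signs: for
`0 ≤ y < 1`, `u n y` is nonnegative and antitone in `y`. Both properties pass to
`E_α(-x) = lim u n (x n ^ (-α))`, a limit which is Euler's product for `Γ` taken term by term.
A nonnegative antitone function which vanishes once vanishes from there on; as `E_α` is analytic
and `E_α(0) = 1`, it never vanishes on the negative half-line.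
-/

section Multichoose

theorem factorial_mul_multichoose {R : Type*} [CommRing R] [BinomialRing R] (r : R) (n : ℕ) :
    (n.factorial : R) * multichoose r n = (ascPochhammer R n).eval r := by
  rw [← nsmul_eq_mul, factorial_nsmul_multichoose_eq_ascPochhammer,
    Polynomial.ascPochhammer_smeval_eq_eval]

theorem multichoose_add {R : Type*} [CommRing R] [BinomialRing R] (r s : R) (n : ℕ) :
    multichoose (r + s) n =
      ∑ p ∈ antidiagonal n, multichoose r p.1 * multichoose s p.2 := by
  have multichoose_eq_choose_neg (t : R) (k : ℕ) :
      multichoose t k = (-1) ^ k * choose (-t) k := by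
    rw [choose_neg', Units.smul_def, zsmul_eq_mul, Int.coe_negOnePow_natCast]
    simp [← mul_assoc, ← mul_pow]
  simp only [multichoose_eq_choose_neg]
  rw [neg_add, add_choose_eq n (Commute.all _ _), Finset.mul_sum]
  refine Finset.sum_congr rfl fun p hp => ?_
  rw [← mem_antidiagonal.1 hp]
  ring

theorem multichoose_succ_right {K : Type*} [Field K] [CharZero K] (r : K) (n : ℕ) :
    multichoose r (n + 1) = multichoose r n * ((r + n) / (n + 1)) := by
  have hfactorial : (n.factorial : K) ≠ 0 := Nat.cast_ne_zero.2 n.factorial_ne_zero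
  have hsucc : (n + 1 : K) ≠ 0 := n.cast_add_one_ne_zero
  have heval := factorial_mul_multichoose r (n + 1)
  rw [ascPochhammer_succ_eval, ← factorial_mul_multichoose, Nat.factorial_succ, Nat.cast_mul,
    Nat.cast_succ] at heval
  refine mul_left_cancel₀ (mul_ne_zero hsucc hfactorial) (heval.trans ?_)
  field_simp

variable {K : Type*} [Field K] [LinearOrder K] [IsStrictOrderedRing K] {r : K}

theorem multichoose_nonneg (hr : 0 ≤ r) (n : ℕ) : 0 ≤ multichoose r n := by
  induction n with
  | zero => simp
  | succ n ih =>
    rw [multichoose_succ_right]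
    positivity

theorem multichoose_succ_nonpos (hr : -1 ≤ r) (hr' : r ≤ 0) (n : ℕ) :
    multichoose r (n + 1) ≤ 0 := by
  induction n with
  | zero => simpa using hr'
  | succ n ih =>
    rw [multichoose_succ_right]
    refine mul_nonpos_of_nonpos_of_nonneg ih (div_nonneg ?_ (by positivity))
    push_cast
    linarith [n.cast_nonneg (α := K)]

end Multichoose

theorem nonneg_of_mul_add_convolution_nonneg {K : Type*} [CommRing K] [LinearOrder K]
    [IsStrictOrderedRing K] {a u : ℕ → K} {y : K} (hya : 0 < y + a 0)
    (ha : ∀ n, a (n + 1) ≤ 0)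
    (h : ∀ n, 0 ≤ y * u n + ∑ p ∈ antidiagonal n, a p.1 * u p.2) (n : ℕ) : 0 ≤ u n := by
  induction n using Nat.strong_induction_on with
  | _ n ih =>
    suffices 0 ≤ (y + a 0) * u n from nonneg_of_mul_nonneg_right this hya
    cases n with
    | zero => simpa [add_mul] using h 0
    | succ n =>
      have hsum : ∑ p ∈ antidiagonal n, a (p.1 + 1) * u p.2 ≤ 0 :=
        Finset.sum_nonpos fun p hp => mul_nonpos_of_nonpos_of_nonneg (ha _)
          (ih _ (Nat.lt_succ_of_le (antidiagonal.snd_le hp)))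
      have := h (n + 1)
      rw [Finset.Nat.sum_antidiagonal_succ] at this
      linarith

theorem summable_eval_natCast_mul_pow {R : Type*} [NormedCommRing R] [HasSummableGeomSeries R]
    (p : Polynomial R) {y : R} (hy : ‖y‖ < 1) : Summable fun m : ℕ => p.eval (m : R) * y ^ m := by
  simp only [Polynomial.eval_eq_sum_range, Finset.sum_mul, mul_assoc]
  exact summable_sum fun k _ => (summable_pow_mul_geometric_of_norm_lt_one k hy).mul_left _

theorem summable_multichoose_mul_pow (a b : ℝ) (n : ℕ) {y : ℝ} (hy : |y| < 1) :
    Summable fun m : ℕ => multichoose (a * m + b) n * y ^ m := by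
  let p : Polynomial ℝ := (ascPochhammer ℝ n).comp (.C a * .X + .C b)
  have hp (m : ℕ) : multichoose (a * m + b) n = (n.factorial : ℝ)⁻¹ * p.eval (m : ℝ) := by
    rw [eq_inv_mul_iff_mul_eq₀ (by positivity), factorial_mul_multichoose]
    simp [p]
  simp only [hp, mul_assoc]
  exact (summable_eval_natCast_mul_pow p hy).mul_left _

/-- The discrete Mittag-Leffler function: the coefficient of `q ^ n` in
`(1 - q) ^ (α - 1) / ((1 - q) ^ α + y)`, expanded in powers of `y`. It approximates
`mittagLeffler α (-y * n ^ α)`. Only `|y| < 1` is meaningful: the series diverges for larger `y`. -/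
noncomputable def discreteMittagLeffler (α y : ℝ) (n : ℕ) : ℝ :=
  ∑' m : ℕ, multichoose (α * m + 1) n * (-y) ^ m

section Discrete

variable {α y : ℝ}

theorem discreteMittagLeffler_convolution (hy : |y| < 1) (n : ℕ) :
    y * discreteMittagLeffler α y n +
        ∑ p ∈ antidiagonal n, multichoose (-α) p.1 * discreteMittagLeffler α y p.2 =
      multichoose (1 - α) n := by
  have hs (b : ℝ) (k : ℕ) : Summable fun m : ℕ => multichoose (α * m + b) k * (-y) ^ m :=
    summable_multichoose_mul_pow α b k (by rwa [abs_neg])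
  have hconv : ∑ p ∈ antidiagonal n, multichoose (-α) p.1 * discreteMittagLeffler α y p.2 =
      ∑' m : ℕ, multichoose (α * m + (1 - α)) n * (-y) ^ m := by
    have hs_mul (p : ℕ × ℕ) : Summable fun m : ℕ =>
        multichoose (-α) p.1 * (multichoose (α * m + 1) p.2 * (-y) ^ m) := (hs 1 p.2).mul_left _
    simp only [discreteMittagLeffler, ← tsum_mul_left]
    rw [← Summable.tsum_finsetSum fun p _ => hs_mul p]
    refine tsum_congr fun m => ?_
    rw [show α * m + (1 - α) = -α + (α * m + 1) by ring, multichoose_add, Finset.sum_mul]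
    simp only [mul_assoc]
  have hshift (m : ℕ) : multichoose (α * (m + 1 : ℕ) + (1 - α)) n * (-y) ^ (m + 1) =
      -y * (multichoose (α * m + 1) n * (-y) ^ m) := by
    rw [show α * (m + 1 : ℕ) + (1 - α) = α * m + 1 by push_cast; ring]
    ring
  rw [hconv, (hs _ n).tsum_eq_zero_add]
  simp only [hshift, tsum_mul_left, discreteMittagLeffler]
  simp

theorem discreteMittagLeffler_nonneg (hα : α ∈ Icc 0 1) (hy : y ∈ Ico 0 1) (n : ℕ) :
    0 ≤ discreteMittagLeffler α y n := by
  have hya : 0 < y + multichoose (-α) 0 := by simpa using add_pos_of_nonneg_of_pos hy.1 one_pos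
  have ha : ∀ k, multichoose (-α) (k + 1) ≤ 0 :=
    multichoose_succ_nonpos (neg_le_neg hα.2) (neg_nonpos.2 hα.1)
  refine nonneg_of_mul_add_convolution_nonneg hya ha (fun k => ?_) n
  rw [discreteMittagLeffler_convolution ((abs_of_nonneg hy.1).trans_lt hy.2)]
  exact multichoose_nonneg (sub_nonneg.2 hα.2) k

theorem antitoneOn_discreteMittagLeffler (hα : α ∈ Icc 0 1) (n : ℕ) :
    AntitoneOn (fun y => discreteMittagLeffler α y n) (Ico 0 1) := by
  intro y hy z hz hyz
  have hya : 0 < y + multichoose (-α) 0 := by simpa using add_pos_of_nonneg_of_pos hy.1 one_pos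
  have ha : ∀ k, multichoose (-α) (k + 1) ≤ 0 :=
    multichoose_succ_nonpos (neg_le_neg hα.2) (neg_nonpos.2 hα.1)
  have hdiff (k : ℕ) : y * (discreteMittagLeffler α y k - discreteMittagLeffler α z k) +
      ∑ p ∈ antidiagonal k, multichoose (-α) p.1 *
        (discreteMittagLeffler α y p.2 - discreteMittagLeffler α z p.2) =
      (z - y) * discreteMittagLeffler α z k := by
    have hrec {x : ℝ} (hx : x ∈ Ico (0 : ℝ) 1) :=
      discreteMittagLeffler_convolution (α := α) ((abs_of_nonneg hx.1).trans_lt hx.2) k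
    simp only [mul_sub, Finset.sum_sub_distrib]
    linear_combination hrec hy - hrec hz
  refine sub_nonneg.1 (nonneg_of_mul_add_convolution_nonneg
    (u := fun k => discreteMittagLeffler α y k - discreteMittagLeffler α z k)
    hya ha (fun k => ?_) n)
  rw [hdiff]
  exact mul_nonneg (sub_nonneg.2 hyz) (discreteMittagLeffler_nonneg hα hz k)

end Discrete

section Limit

theorem inv_GammaSeq {s : ℝ} {n : ℕ} (hn : n ≠ 0) :
    (Real.GammaSeq s n)⁻¹ = (s + n) / n * (multichoose s n * (n : ℝ) ^ (1 - s)) := by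
  have hn' : (0 : ℝ) < n := by positivity
  have hprod (k : ℕ) : ∏ j ∈ Finset.range k, (s + j) = k.factorial * multichoose s k := by
    induction k with
    | zero => simp
    | succ k ih =>
      rw [Finset.prod_range_succ, ih, multichoose_succ_right, Nat.factorial_succ]
      push_cast
      field_simp
  rw [Real.GammaSeq, Finset.prod_range_succ, hprod, Real.rpow_sub hn', Real.rpow_one]
  field_simp

theorem tendsto_multichoose_mul_rpow {s : ℝ} (hs : Real.Gamma s ≠ 0) :
    Tendsto (fun n : ℕ => multichoose s n * (n : ℝ) ^ (1 - s)) atTop (𝓝 (Real.Gamma s)⁻¹) := by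
  have hratio : Tendsto (fun n : ℕ => (n : ℝ) / (n + s)) atTop (𝓝 1) :=
    tendsto_natCast_div_add_atTop s
  have hprod := hratio.mul ((Real.GammaSeq_tendsto_Gamma s).inv₀ hs)
  rw [one_mul] at hprod
  have hne : ∀ᶠ n : ℕ in atTop, (n : ℝ) + s ≠ 0 :=
    (tendsto_atTop_add_const_right _ s tendsto_natCast_atTop_atTop).eventually_ne_atTop 0
  refine hprod.congr' ?_
  filter_upwards [hne, eventually_ne_atTop 0] with n hns hn
  rw [inv_GammaSeq hn, add_comm s]
  field_simp

theorem antitoneOn_multichoose_mul_rpow {s : ℝ} (hs : 1 ≤ s) :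
    AntitoneOn (fun n : ℕ => multichoose s n * (n : ℝ) ^ (1 - s)) (Ici 1) := by
  refine antitoneOn_nat_Ici_of_succ_le fun n hn => ?_
  have hn₀ : (0 : ℝ) < n := by exact_mod_cast hn
  have hlog : 1 / (n + 1 : ℝ) ≤ Real.log ((n + 1) / n) := by
    have h := Real.one_sub_inv_le_log_of_pos (x := (n + 1 : ℝ) / n) (by positivity)
    rwa [show 1 - ((n + 1 : ℝ) / n)⁻¹ = 1 / (n + 1) by field_simp; ring] at h
  have hratio : (s + n) / (n + 1) ≤ ((n + 1 : ℝ) / n) ^ (s - 1) := calc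
    (s + n) / (n + 1) = (s - 1) * (1 / (n + 1 : ℝ)) + 1 := by field_simp; ring
    _ ≤ Real.exp ((s - 1) * (1 / (n + 1 : ℝ))) := Real.add_one_le_exp _
    _ ≤ Real.exp (Real.log ((n + 1) / n) * (s - 1)) := by
      rw [mul_comm]
      gcongr
    _ = ((n + 1 : ℝ) / n) ^ (s - 1) := (Real.rpow_def_of_pos (by positivity) _).symm
  calc multichoose s (n + 1) * ((n + 1 : ℕ) : ℝ) ^ (1 - s)
      = multichoose s n * ((s + n) / (n + 1) * (n + 1 : ℝ) ^ (1 - s)) := by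
        rw [multichoose_succ_right]; push_cast; ring
    _ ≤ multichoose s n * (((n + 1 : ℝ) / n) ^ (s - 1) * (n + 1 : ℝ) ^ (1 - s)) := by
        have := multichoose_nonneg (zero_le_one.trans hs) n
        gcongr
    _ = multichoose s n * (n : ℝ) ^ (1 - s) := by
        rw [Real.div_rpow (by positivity) hn₀.le, ← neg_sub s 1, Real.rpow_neg (by positivity),
          Real.rpow_neg hn₀.le]
        field_simp

theorem inv_Gamma_le_multichoose_mul_rpow {s : ℝ} (hs : 1 ≤ s) {n : ℕ} (hn : 1 ≤ n) :
    (Real.Gamma s)⁻¹ ≤ multichoose s n * (n : ℝ) ^ (1 - s) := by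
  refine le_of_tendsto (tendsto_multichoose_mul_rpow (Real.Gamma_pos_of_pos (by linarith)).ne') ?_
  filter_upwards [eventually_ge_atTop n] with k hk
  exact antitoneOn_multichoose_mul_rpow hs hn (hn.trans hk) hk

theorem tendsto_mul_natCast_rpow_neg {α : ℝ} (hα : 0 < α) (x : ℝ) :
    Tendsto (fun n : ℕ => x * (n : ℝ) ^ (-α)) atTop (𝓝 0) := by
  simpa using ((tendsto_rpow_neg_atTop hα).comp tendsto_natCast_atTop_atTop).const_mul x

theorem mul_rpow_neg_pow (α x : ℝ) {t : ℝ} (ht : 0 ≤ t) (m : ℕ) :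
    (x * t ^ (-α)) ^ m = x ^ m * t ^ (1 - (α * m + 1)) := by
  rw [mul_pow, ← Real.rpow_mul_natCast ht]
  congr 2
  ring

variable {α : ℝ}

theorem exists_summable_multichoose_mul_rpow_mul_pow (hα : 0 < α) (r : ℝ) :
    ∃ N : ℕ, 1 ≤ N ∧ Summable fun m : ℕ =>
      multichoose (α * m + 1) N * (N : ℝ) ^ (1 - (α * m + 1)) * r ^ m := by
  have hsmall := (tendsto_mul_natCast_rpow_neg hα r).abs
  rw [abs_zero] at hsmall
  obtain ⟨N, hlt, hN⟩ := ((hsmall.eventually_lt_const one_pos).and (eventually_ge_atTop 1)).exists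
  refine ⟨N, hN, (summable_multichoose_mul_pow α 1 N hlt).congr fun m => ?_⟩
  rw [mul_rpow_neg_pow α r N.cast_nonneg]
  ring

theorem tendsto_discreteMittagLeffler (hα : 0 < α) (x : ℝ) :
    Tendsto (fun n : ℕ => discreteMittagLeffler α (x * (n : ℝ) ^ (-α)) n) atTop
      (𝓝 (mittagLeffler α (-x))) := by
  obtain ⟨N, hN, hsum⟩ := exists_summable_multichoose_mul_rpow_mul_pow hα |x|
  have hterm (n m : ℕ) : multichoose (α * m + 1) n * (-(x * (n : ℝ) ^ (-α))) ^ m =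
      multichoose (α * m + 1) n * (n : ℝ) ^ (1 - (α * m + 1)) * (-x) ^ m := by
    rw [← neg_mul, mul_rpow_neg_pow α (-x) n.cast_nonneg]
    ring
  simp only [discreteMittagLeffler, hterm]
  refine tendsto_tsum_of_dominated_convergence hsum (fun m => ?_) ?_
  · rw [div_eq_inv_mul]
    exact (tendsto_multichoose_mul_rpow
      (Real.Gamma_pos_of_pos (by positivity)).ne').mul_const _
  · filter_upwards [eventually_ge_atTop N] with n hn m
    have hs : 1 ≤ α * m + 1 := le_add_of_nonneg_left (by positivity)
    have hnonneg := multichoose_nonneg (zero_le_one.trans hs) n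
    rw [norm_mul, norm_pow, norm_neg, Real.norm_of_nonneg (by positivity), Real.norm_eq_abs]
    gcongr ?_ * _
    exact antitoneOn_multichoose_mul_rpow hs hN (hN.trans hn) hn

end Limit

section MittagLeffler

variable {α : ℝ}

theorem analyticOnNhd_mittagLeffler (hα : 0 < α) : AnalyticOnNhd ℝ (mittagLeffler α) univ := by
  let c (m : ℕ) : ℝ := (Real.Gamma (α * m + 1))⁻¹
  have hsum : mittagLeffler α = FormalMultilinearSeries.ofScalarsSum c := by
    ext z
    simp only [FormalMultilinearSeries.ofScalars_sum_eq, mittagLeffler, c, div_eq_inv_mul,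
      smul_eq_mul]
  have hradius : (FormalMultilinearSeries.ofScalars ℝ c).radius = ⊤ := by
    refine FormalMultilinearSeries.radius_eq_top_of_summable_norm _ fun r => ?_
    obtain ⟨N, hN, hsummable⟩ := exists_summable_multichoose_mul_rpow_mul_pow hα r
    refine hsummable.of_nonneg_of_le (fun m => by positivity) fun m => ?_
    have hs : 1 ≤ α * m + 1 := le_add_of_nonneg_left (by positivity)
    rw [FormalMultilinearSeries.ofScalars_norm,
      Real.norm_of_nonneg (inv_nonneg.2 (Real.Gamma_nonneg_of_nonneg (by positivity)))]
    gcongr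
    exact inv_Gamma_le_multichoose_mul_rpow hs hN
  have hball := (FormalMultilinearSeries.ofScalars ℝ c).hasFPowerSeriesOnBall (by simp [hradius])
  rw [hradius] at hball
  rw [hsum, ← Metric.eball_top (0 : ℝ)]
  exact hball.analyticOnNhd

@[simp]
theorem mittagLeffler_zero (α : ℝ) : mittagLeffler α 0 = 1 := by
  rw [mittagLeffler, tsum_eq_single 0 fun m hm => by simp [hm]]
  simp

theorem eventually_mul_natCast_rpow_neg_mem_Ico (hα : 0 < α) {x : ℝ} (hx : 0 ≤ x) :
    ∀ᶠ n : ℕ in atTop, x * (n : ℝ) ^ (-α) ∈ Ico 0 1 := by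
  filter_upwards [(tendsto_mul_natCast_rpow_neg hα x).eventually_lt_const one_pos] with n hn
  exact ⟨by positivity, hn⟩

theorem mittagLeffler_neg_nonneg (hα : α ∈ Ioc 0 1) {x : ℝ} (hx : 0 ≤ x) :
    0 ≤ mittagLeffler α (-x) := by
  refine ge_of_tendsto (tendsto_discreteMittagLeffler hα.1 x) ?_
  filter_upwards [eventually_mul_natCast_rpow_neg_mem_Ico hα.1 hx] with n hn
  exact discreteMittagLeffler_nonneg (Ioc_subset_Icc_self hα) hn n

theorem antitoneOn_mittagLeffler_neg (hα : α ∈ Ioc 0 1) :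
    AntitoneOn (fun x => mittagLeffler α (-x)) (Ici 0) := by
  intro x hx y hy hxy
  refine le_of_tendsto_of_tendsto (tendsto_discreteMittagLeffler hα.1 y)
    (tendsto_discreteMittagLeffler hα.1 x) ?_
  filter_upwards [eventually_mul_natCast_rpow_neg_mem_Ico hα.1 hx,
    eventually_mul_natCast_rpow_neg_mem_Ico hα.1 hy] with n hxn hyn
  exact antitoneOn_discreteMittagLeffler (Ioc_subset_Icc_self hα) n hxn hyn (by gcongr)

theorem mittagLeffler_neg_pos (hα : α ∈ Ioc 0 1) {x : ℝ} (hx : 0 ≤ x) :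
    0 < mittagLeffler α (-x) := by
  refine (mittagLeffler_neg_nonneg hα hx).lt_of_ne' fun hzero => ?_
  have hvanish : mittagLeffler α =ᶠ[𝓝 (-x - 1)] 0 := by
    filter_upwards [Iio_mem_nhds (sub_one_lt (-x))] with z hz
    have hxz : x ≤ -z := le_neg_of_le_neg hz.le
    have hle := antitoneOn_mittagLeffler_neg hα hx (hx.trans hxz) hxz
    have hge := mittagLeffler_neg_nonneg hα (hx.trans hxz)
    simp only [neg_neg, hzero] at hle hge
    exact hle.antisymm hge
  have hfun := (analyticOnNhd_mittagLeffler hα.1).eq_of_eventuallyEq analyticOnNhd_const hvanish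
  exact one_ne_zero ((mittagLeffler_zero α).symm.trans (congrFun hfun 0))

end MittagLeffler

/-- For `α ∈ (0,1)` and `λ > 0`, `0 < E_α(−λt^α) ≤ 1` for all `t ≥ 0` and
`t ↦ E_α(−λt^α)` is monotonically decreasing on `[0,∞)`. -/
theorem mittagLeffler_pos_le_one_antitone
    (α lam : ℝ) (hα : α ∈ Ioo (0:ℝ) 1) (hlam : 0 < lam) :
    (∀ t : ℝ, 0 ≤ t →
      0 < mittagLeffler α (-lam * t ^ α) ∧ mittagLeffler α (-lam * t ^ α) ≤ 1)
    ∧ AntitoneOn (fun t : ℝ => mittagLeffler α (-lam * t ^ α)) (Ici 0) := by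
  have hα' : α ∈ Ioc 0 1 := Ioo_subset_Ioc_self hα
  have hanti := antitoneOn_mittagLeffler_neg hα'
  have harg_nonneg {t : ℝ} (ht : 0 ≤ t) : 0 ≤ lam * t ^ α := by positivity
  simp only [neg_mul]
  refine ⟨fun t ht => ⟨mittagLeffler_neg_pos hα' (harg_nonneg ht), ?_⟩, fun s hs t ht hst => ?_⟩
  · simpa using hanti self_mem_Ici (harg_nonneg ht) (harg_nonneg ht)
  · have hpow : s ^ α ≤ t ^ α := Real.rpow_le_rpow hs hst hα.1.le
    exact hanti (harg_nonneg hs) (harg_nonneg ht) (by gcongr)
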